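/- Let m ∈ ℕ with m ≥ 1, let p₁,…,p_m be minimal idempotent ultrafilters on ℕ, let A ∈ ⊗_{i=1}^m p_i, and let T ∈ 𝒫_f(ℙ). Then there exist functions α₁,…,α_m : 𝒫_f(ℕ^ℕ) → ℕ and H₁,…,H_m : 𝒫_f(ℕ^ℕ) → 𝒫_f(ℕ) such that (1) whenever G, K ∈ 𝒫_f(ℕ^ℕ) and G ⊊ K one has max H_j(G) < min H_j(K) for every j ∈ {1,…,m}, and (2) whenever n ≥ m, G₁ ⊊ G₂ ⊊ ⋯ ⊊ G_n in 𝒫_f(ℕ^ℕ), f_i ∈ G_i for each i ∈ {1,…,n}, β₁ < β₂ < ⋯ < β_m are nonempty subsets of {1,…,n}, and P₁,…,P_m ∈ T, the tuple (Σ_{i∈β₁}α₁(G_i) + P₁(Σ_{i∈β₁}Σ_{t∈H₁(G_i)}f_i(t)), …, Σ_{i∈β_m}α_m(G_i) + P_m(Σ_{i∈β_m}Σ_{t∈H_m(G_i)}f_i(t))) belongs to A. -/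

import Mathlib

namespace MultiCST

/-- The sum `p + q` of ultrafilters on ℕ: `A ∈ p + q` iff `{x : {y : x+y ∈ A} ∈ q} ∈ p`. -/
def uAdd (p q : Ultrafilter ℕ) : Ultrafilter ℕ :=
  p.bind fun x => q.map fun y => x + y

/-- `A ⊆ ℕ` is a J-set. -/
def IsJSet (A : Set ℕ) : Prop :=
  ∀ F : Finset (ℕ → ℕ), F.Nonempty →
    ∃ (a : ℕ) (β : Finset ℕ), β.Nonempty ∧ ∀ f ∈ F, a + ∑ t ∈ β, f t ∈ A

/-- `p ∈ 𝒥`: every member of `p` is a J-set. -/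
def MemJ (p : Ultrafilter ℕ) : Prop := ∀ A : Set ℕ, A ∈ p → IsJSet A

/-- `p` is an idempotent ultrafilter. -/
def IdempotentUF (p : Ultrafilter ℕ) : Prop := uAdd p p = p

/-- `p` is a minimal idempotent ultrafilter. -/
def IsMinimalIdempotent (p : Ultrafilter ℕ) : Prop :=
  IdempotentUF p ∧
    ∀ q : Ultrafilter ℕ, IdempotentUF q → uAdd q p = q → uAdd p q = q → q = p

/-- Tensor product `⊗_{i=1}^m p_i` of ultrafilters on ℕ, as an ultrafilter on `Fin m → ℕ`. -/
def tensor : ∀ m : ℕ, (Fin m → Ultrafilter ℕ) → Ultrafilter (Fin m → ℕ)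
  | 0, _ => pure fun i => i.elim0
  | m + 1, p =>
      (p 0).bind fun x => (tensor m fun i => p i.succ).map fun v => Fin.cons x v

/-- `f : ℕ → ℕ` is (given by) a polynomial with coefficients in ℕ and zero constant term. -/
def IsPolyZeroConst (f : ℕ → ℕ) : Prop :=
  ∃ P : Polynomial ℕ, P.coeff 0 = 0 ∧ ∀ x, f x = P.eval x

/-- The linear combination `a₁·p₁ + a₂·p₂ + ⋯ + a_m·p_m` of ultrafilters on ℕ. -/
def linComb : ∀ m : ℕ, (Fin m → ℕ) → (Fin m → Ultrafilter ℕ) → Ultrafilter ℕ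
  | 0, _, _ => pure 0
  | m + 1, a, p =>
      uAdd ((p 0).map fun x => a 0 * x)
        (linComb m (fun i => a i.succ) fun i => p i.succ)

/-!
Every member of a minimal idempotent `p` is a *polynomial* J-set. Indeed, `p` still generates a
minimal left ideal in `βℤ`, so its return times to any set are empty or syndetic. Colour focusing on
such a set reduces recurrence along finitely many polynomial maps `Q` to recurrence along their
differences `v ↦ Q (v + w) - Q w - g v`, a family of smaller weight when `g` has least degree; this
is polynomial exhaustion. Recurrence along an idempotent supported on the finite sums of the
sequence `t ↦ (f ↦ f t)` gives the configurations `a + P (∑ t ∈ H, f t)`.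

A member of `⊗ p k` is unfolded into a tree of finite sequences. The values `α k F` and `H k F` are
then chosen by recursion on `F` along `⊂`, so that each of the finitely many partial tuples arising
from chains below `F` remains extendable in the tree. As `P (s + x) = P s + Q x` with `Q` again a
polynomial without constant term, one more summand is one more application of the polynomial J-set
property, and idempotence of `p k` keeps room for the next one.
-/

open Filter

attribute [local instance] Ultrafilter.add Ultrafilter.addSemigroup

section PolynomialMaps

variable {V M : Type*} [AddCommMonoid V] [AddCommGroup M]

/-- The polarised difference operator `Q ↦ (v ↦ Q (v + u) - Q v - Q u)`, under which maps vanishing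
at `0` stay so. -/
def polarDiff (u : V) : (V → M) →+ (V → M) where
  toFun Q v := Q (v + u) - Q v - Q u
  map_zero' := by ext; simp
  map_add' Q R := by ext; simp only [Pi.add_apply]; abel

theorem polarDiff_apply (u : V) (Q : V → M) (v : V) :
    polarDiff u Q v = Q (v + u) - Q v - Q u := rfl

variable (V M) in
/-- The group of polynomial maps `V → M` of degree at most `k` vanishing at `0`. -/
def polyMap : ℕ → AddSubgroup (V → M)
  | 0 => ⊥
  | k + 1 => ⨅ u, (polyMap k).comap (polarDiff u)

theorem mem_polyMap_succ {k : ℕ} {Q : V → M} :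
    Q ∈ polyMap V M (k + 1) ↔ ∀ u, polarDiff u Q ∈ polyMap V M k := by
  simp [polyMap, AddSubgroup.mem_iInf]

theorem polyMap_mono : Monotone (polyMap V M) := by
  refine monotone_nat_of_le_succ fun k ↦ ?_
  induction k with
  | zero => exact bot_le
  | succ k ih => exact fun Q hQ ↦ mem_polyMap_succ.2 fun u ↦ ih (mem_polyMap_succ.1 hQ u)

theorem map_zero_of_mem_polyMap {k : ℕ} {Q : V → M} (hQ : Q ∈ polyMap V M k) : Q 0 = 0 := by
  induction k generalizing Q with
  | zero => exact congrFun hQ 0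
  | succ k ih => simpa [polarDiff_apply] using ih (mem_polyMap_succ.1 hQ 0)

theorem natDegree_taylor_sub_le {R : Type*} [CommRing R] (r : R) {P : Polynomial R} {k : ℕ}
    (hP : P.natDegree ≤ k + 1) : (P.taylor r - P).natDegree ≤ k := by
  refine Polynomial.natDegree_le_pred (n := k + 1) ?_ ?_
  · exact (Polynomial.natDegree_sub_le _ _).trans (by simpa using hP)
  · rcases hP.eq_or_lt with h | h
    · rw [Polynomial.coeff_sub, ← h, Polynomial.coeff_taylor_natDegree, Polynomial.leadingCoeff,
        sub_self]
    · rw [Polynomial.coeff_eq_zero_of_natDegree_lt]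
      exact (Polynomial.natDegree_sub_le _ _).trans_lt (by simpa using h)

theorem eval_comp_mem_polyMap {R : Type*} [CommRing R] (φ : V →+ R) {P : Polynomial R} {k : ℕ}
    (h0 : P.coeff 0 = 0) (hP : P.natDegree ≤ k) :
    (fun v ↦ P.eval (φ v)) ∈ polyMap V R k := by
  induction k generalizing P with
  | zero =>
    rw [Polynomial.eq_C_of_natDegree_le_zero hP, h0]
    simp only [map_zero, Polynomial.eval_zero]
    exact zero_mem _
  | succ k ih =>
    refine mem_polyMap_succ.2 fun u ↦ ?_
    convert ih (P := P.taylor (φ u) - P - Polynomial.C (P.eval (φ u))) ?_ ?_ using 1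
    · ext v
      simp [polarDiff_apply, Polynomial.taylor_eval]
    · simp [h0]
    · rw [Polynomial.natDegree_sub_C]
      exact natDegree_taylor_sub_le _ hP

theorem IsPolyZeroConst.map_zero {P : ℕ → ℕ} (hP : IsPolyZeroConst P) : P 0 = 0 := by
  obtain ⟨Q, h0, h⟩ := hP
  rw [h, ← Polynomial.coeff_zero_eq_eval_zero, h0]

theorem IsPolyZeroConst.exists_apply_add {P : ℕ → ℕ} (hP : IsPolyZeroConst P) (s : ℕ) :
    ∃ Q, IsPolyZeroConst Q ∧ ∀ x, P (s + x) = P s + Q x := by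
  obtain ⟨R, -, hR⟩ := hP
  let S := (R.taylor s).divX * Polynomial.X
  refine ⟨fun x ↦ S.eval x, ⟨S, by simp [S], fun _ ↦ rfl⟩, fun x ↦ ?_⟩
  have h := congrArg (Polynomial.eval x) (R.taylor s).divX_mul_X_add
  rw [Polynomial.eval_add, Polynomial.eval_C, Polynomial.taylor_coeff_zero,
    Polynomial.taylor_eval] at h
  rw [hR, hR, add_comm s x, ← h, add_comm]

theorem IsPolyZeroConst.exists_mem_polyMap {P : ℕ → ℕ} (hP : IsPolyZeroConst P) (φ : V →+ ℕ) :
    ∃ k, (fun v ↦ (P (φ v) : ℤ)) ∈ polyMap V ℤ k := by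
  obtain ⟨R, h0, hR⟩ := hP
  refine ⟨(R.map (Nat.castRingHom ℤ)).natDegree, ?_⟩
  convert eval_comp_mem_polyMap ((Nat.castAddMonoidHom ℤ).comp φ)
    (P := R.map (Nat.castRingHom ℤ)) (by simp [h0]) le_rfl using 1
  ext v
  rw [hR]
  exact (Polynomial.eval_natCast_map (Nat.castRingHom ℤ) R (φ v)).symm

end PolynomialMaps

section ColourFocusing

variable {V M : Type*} [AddCommMonoid V] [AddCommGroup M]

theorem eventually_add_mem_and {S : Type*} [AddSemigroup S] {p : Ultrafilter S} (hp : p + p = p)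
    {c : S} {B : Set S} (h : ∀ᶠ y in p, c + y ∈ B) :
    ∀ᶠ y in p, c + y ∈ B ∧ ∀ᶠ z in p, c + y + z ∈ B := by
  refine h.and ?_
  rw [← hp, Ultrafilter.eventually_add] at h
  simpa only [add_assoc] using h

/-- A translation invariant, intersection closed family whose nonempty members are syndetic: it
abstracts the return times of a fixed point of a minimal system to the open sets. -/
structure IsMinimalFamily (𝓑 : Set (Set M)) : Prop where
  inter_mem : ∀ C ∈ 𝓑, ∀ D ∈ 𝓑, C ∩ D ∈ 𝓑
  translate_mem : ∀ C ∈ 𝓑, ∀ r : M, {y | y + r ∈ C} ∈ 𝓑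
  syndetic : ∀ C ∈ 𝓑, C.Nonempty → ∃ E : Finset M, ∀ y, ∃ e ∈ E, y + e ∈ C

theorem IsMinimalFamily.inter_translates_mem {𝓑 : Set (Set M)} (h𝓑 : IsMinimalFamily 𝓑) {C : Set M}
    (hC : C ∈ 𝓑) (S : Finset M) : {y | y ∈ C ∧ ∀ r ∈ S, y + r ∈ C} ∈ 𝓑 := by
  classical
  induction S using Finset.induction_on with
  | empty => simpa using hC
  | insert a S _ ih =>
    convert h𝓑.inter_mem _ ih _ (h𝓑.translate_mem C hC a) using 1
    ext y
    simp only [Finset.forall_mem_insert, Set.mem_ofPred_eq, Set.mem_inter_iff]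
    tauto

theorem IsMinimalFamily.exists_translates_subset {𝓑 : Set (Set M)} (h𝓑 : IsMinimalFamily 𝓑)
    {C : Set M} (hC : C ∈ 𝓑) {S : Finset M} {b : M} (hb : b ∈ C) (hS : ∀ r ∈ S, b + r ∈ C) (g : M) :
    ∃ C' ∈ 𝓑, C'.Nonempty ∧ ∀ y ∈ C', ∀ r ∈ S, y + g + r ∈ C :=
  ⟨_, h𝓑.translate_mem _ (h𝓑.inter_translates_mem hC S) g, ⟨b - g, by simpa using ⟨hb, hS⟩⟩,
    fun _ hy ↦ hy.2⟩

/-- The set `C` is colour focused on the spokes `u e`, `e ∈ K`: every point of `C` is carried into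
the translate `B - e` by all moves `Q (u e)`. The spokes are kept in `D`, robustly along `p`. -/
structure IsFocused (p : Ultrafilter V) (D : Set V) (Φ : Finset (V → M)) (B C : Set M)
    (K : Finset M) (u : M → V) : Prop where
  spoke_mem : ∀ e ∈ K, u e ∈ D
  spoke_add_mem : ∀ e ∈ K, ∀ᶠ v in p, u e + v ∈ D
  move_mem : ∀ e ∈ K, ∀ y ∈ C, ∀ Q ∈ Φ, y + Q (u e) + e ∈ B

namespace IsFocused

variable {p : Ultrafilter V} {D : Set V} {Φ : Finset (V → M)} {B C : Set M} {K : Finset M}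
  {u : M → V}

theorem notMem_of_add_mem (hK : IsFocused p D Φ B C K u)
    (hD : ∀ v ∈ D, ∀ b ∈ B, ∃ Q ∈ Φ, b + Q v ∉ B)
    {e y : M} (hy : y ∈ C) (hye : y + e ∈ B) : e ∉ K := by
  intro he
  obtain ⟨Q, hQ, hQB⟩ := hD _ (hK.spoke_mem e he) _ hye
  exact hQB (by simpa only [add_right_comm] using hK.move_mem e he y hy Q hQ)

theorem insert [DecidableEq V] [DecidableEq M] (hK : IsFocused p D Φ B C K u)
    (hΦ : ∀ Q ∈ Φ, Q 0 = 0) {e : M} (he : ∀ y ∈ C, y + e ∈ B) (heK : e ∉ K) {v : V}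
    (hv : ∀ w ∈ insert 0 (K.image u), w + v ∈ D ∧ ∀ᶠ z in p, w + v + z ∈ D) {C' : Set M}
    (hC' : ∀ y ∈ C', ∀ Q ∈ Φ, ∀ w ∈ insert 0 (K.image u), y + (Q (v + w) - Q w) ∈ C) :
    IsFocused p D Φ B C' (insert e K) (Function.update (fun e ↦ u e + v) e v) := by
  simp only [Finset.forall_mem_insert, Finset.forall_mem_image, zero_add, add_zero] at hv hC'
  have hne : ∀ e' ∈ K, e' ≠ e := fun e' he' h ↦ heK (h ▸ he')
  constructor <;> rw [Finset.forall_mem_insert] <;> refine ⟨?_, fun e' he' ↦ ?_⟩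
  · simpa using hv.1.1
  · simpa [hne e' he'] using (hv.2 he').1
  · simpa using hv.1.2
  · simpa [hne e' he'] using (hv.2 he').2
  · intro y hy Q hQ
    simpa [hΦ Q hQ] using he _ (hC' y hy Q hQ).1
  · intro y hy Q hQ
    have h := hK.move_mem e' he' _ ((hC' y hy Q hQ).2 he') Q hQ
    rw [Function.update_of_ne (hne e' he'), add_comm (u e')]
    rwa [add_assoc y, sub_add_cancel] at h

end IsFocused

theorem IsMinimalFamily.eventually_exists_of_shrinking {𝓑 : Set (Set M)} (h𝓑 : IsMinimalFamily 𝓑)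
    {p : Ultrafilter V} (hp : p + p = p) {Φ : Finset (V → M)} (hΦ : ∀ Q ∈ Φ, Q 0 = 0)
    (hshrink : ∀ W : Finset V, ∀ C ∈ 𝓑, C.Nonempty → ∀ᶠ v in p, ∃ C' ∈ 𝓑, C'.Nonempty ∧
      ∀ y ∈ C', ∀ Q ∈ Φ, ∀ w ∈ W, y + (Q (v + w) - Q w) ∈ C)
    {B : Set M} (hB : B ∈ 𝓑) (hBne : B.Nonempty) :
    ∀ᶠ v in p, ∃ b ∈ B, ∀ Q ∈ Φ, b + Q v ∈ B := by
  classical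
  by_contra hno
  set D : Set V := {v | ∀ b ∈ B, ∃ Q ∈ Φ, b + Q v ∉ B}
  have hD : ∀ᶠ v in p, v ∈ D := by
    simpa only [D, Set.mem_ofPred_eq, not_exists, not_and, not_forall, exists_prop]
      using Ultrafilter.eventually_not.2 hno
  obtain ⟨E, hE⟩ := h𝓑.syndetic B hB hBne
  have focus (s : ℕ) : ∃ C ∈ 𝓑, C.Nonempty ∧ ∃ K ⊆ E, K.card = s ∧ ∃ u : M → V,
      IsFocused p D Φ B C K u := by
    induction s with
    | zero => exact ⟨B, hB, hBne, ∅, by simp, rfl, 0, by simp, by simp, by simp⟩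
    | succ s ih =>
      obtain ⟨C, hC, ⟨y, hy⟩, K, hKE, rfl, u, hK⟩ := ih
      obtain ⟨e, he, hye⟩ := hE y
      have heK : e ∉ K := hK.notMem_of_add_mem (fun _ h ↦ h) hy hye
      have hbase : ∀ w ∈ insert 0 (K.image u), ∀ᶠ v in p, w + v ∈ D := by
        simpa [Finset.forall_mem_insert, Finset.forall_mem_image] using ⟨hD, hK.spoke_add_mem⟩
      have hfar := (eventually_all_finset _).2 fun w hw ↦ eventually_add_mem_and hp (hbase w hw)
      obtain ⟨v, hv, C', hC', hC'ne, hmove⟩ := (hfar.and (hshrink (insert 0 (K.image u)) _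
        (h𝓑.inter_mem C hC _ (h𝓑.translate_mem B hB e)) ⟨y, hy, hye⟩)).exists
      have hK' : IsFocused p D Φ B (C ∩ {y | y + e ∈ B}) K u :=
        ⟨hK.spoke_mem, hK.spoke_add_mem, fun e he y hy ↦ hK.move_mem e he y hy.1⟩
      exact ⟨C', hC', hC'ne, insert e K, Finset.insert_subset he hKE,
        Finset.card_insert_of_notMem heK, _, hK'.insert hΦ (fun _ h ↦ h.2) heK hv hmove⟩
  obtain ⟨_, _, _, K, hKE, hKcard, _⟩ := focus (E.card + 1)
  exact absurd (Finset.card_le_card hKE) (by lia)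

end ColourFocusing

section PolynomialExhaustion

variable {V M : Type*} [AddCommMonoid V] [AddCommGroup M]

/-- `Γ` represents the family `Φ` of polynomial maps: each member `(c, d)` of `Γ` stands for the
polynomial maps with the same part of degree `d + 1` as `c`. The multiset of the numbers `d` is the
weight on which polynomial exhaustion inducts. -/
structure IsLeadingSystem (Γ : Multiset ((V → M) × ℕ)) (Φ : Finset (V → M)) : Prop where
  mem_polyMap : ∀ c ∈ Γ, c.1 ∈ polyMap V M (c.2 + 1)
  exists_sub_mem : ∀ Q ∈ Φ, ∃ c ∈ Γ, Q - c.1 ∈ polyMap V M c.2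

open Classical in
/-- The van der Corput family of `Φ` with base `g`: the maps `v ↦ Q (v + w) - Q w - g v` for
`Q ∈ Φ` and `w ∈ W`, of which only the nonzero ones are kept. -/
noncomputable def vanDerCorput (Φ : Finset (V → M)) (W : Finset V) (g : V → M) : Finset (V → M) :=
  (Finset.image₂ (fun Q w ↦ polarDiff w Q + (Q - g)) Φ W).erase 0

theorem add_mem_of_forall_vanDerCorput {Φ : Finset (V → M)} {W : Finset V} {g : V → M} {C : Set M}
    {b : M} {v : V} (hb : b ∈ C) (h : ∀ R ∈ vanDerCorput Φ W g, b + R v ∈ C) {Q : V → M}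
    (hQ : Q ∈ Φ) {w : V} (hw : w ∈ W) : b + (Q (v + w) - Q w - g v) ∈ C := by
  classical
  have hR : (polarDiff w Q + (Q - g)) v = Q (v + w) - Q w - g v := by
    simp only [Pi.add_apply, Pi.sub_apply, polarDiff_apply]
    abel
  rw [← hR]
  by_cases h0 : polarDiff w Q + (Q - g) = 0
  · rw [h0, Pi.zero_apply, add_zero]
    exact hb
  · exact h _ (Finset.mem_erase.2 ⟨h0, Finset.mem_image₂_of_mem hQ hw⟩)

namespace IsLeadingSystem

variable {Γ : Multiset ((V → M) × ℕ)} {Φ : Finset (V → M)}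

theorem map_zero (hΓ : IsLeadingSystem Γ Φ) {Q : V → M} (hQ : Q ∈ Φ) : Q 0 = 0 := by
  obtain ⟨c, hc, hcQ⟩ := hΓ.exists_sub_mem Q hQ
  simpa [map_zero_of_mem_polyMap (hΓ.mem_polyMap c hc)] using map_zero_of_mem_polyMap hcQ

theorem polarDiff_mem (hΓ : IsLeadingSystem Γ Φ) {Q : V → M} {c : (V → M) × ℕ} (hc : c ∈ Γ)
    (hcQ : Q - c.1 ∈ polyMap V M c.2) (w : V) : polarDiff w Q ∈ polyMap V M c.2 := by
  have hQ := add_mem (polyMap_mono c.2.le_succ hcQ) (hΓ.mem_polyMap c hc)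
  rw [sub_add_cancel] at hQ
  exact mem_polyMap_succ.1 hQ w

theorem exists_vanDerCorput (hΓ : IsLeadingSystem Γ Φ) (W : Finset V) {c₀ : (V → M) × ℕ}
    (hc₀ : c₀ ∈ Γ) (hmin : ∀ c ∈ Γ, c₀.2 ≤ c.2) :
    ∃ Γ', IsLeadingSystem Γ' (vanDerCorput Φ W c₀.1) ∧
      (Γ'.map Prod.snd).IsDershowitzMannaLT (Γ.map Prod.snd) := by
  classical
  obtain ⟨g, d⟩ := c₀
  let old : Multiset ((V → M) × ℕ) := (Γ.erase (g, d)).map fun c ↦ (c.1 - g, c.2)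
  let new : Finset ((V → M) × ℕ) :=
    (vanDerCorput Φ W g ×ˢ Finset.range d).filter fun c ↦ c.1 ∈ polyMap V M (c.2 + 1)
  refine ⟨old + new.val, ⟨fun c hc ↦ ?_, fun R hR ↦ ?_⟩, ?_⟩
  · rcases Multiset.mem_add.1 hc with hc | hc
    · obtain ⟨c, hcg, rfl⟩ := Multiset.mem_map.1 hc
      have hcΓ := Multiset.mem_of_mem_erase hcg
      exact sub_mem (hΓ.mem_polyMap c hcΓ)
        (polyMap_mono (Nat.succ_le_succ (hmin c hcΓ)) (hΓ.mem_polyMap _ hc₀))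
    · exact (Finset.mem_filter.1 hc).2
  · obtain ⟨hR0, hRmem⟩ := Finset.mem_erase.1 hR
    obtain ⟨Q, hQ, w, -, rfl⟩ := Finset.mem_image₂.1 hRmem
    obtain ⟨c, hc, hcQ⟩ := hΓ.exists_sub_mem Q hQ
    have hpolar := hΓ.polarDiff_mem hc hcQ w
    by_cases hcg : c = (g, d)
    · subst hcg
      obtain _ | d := d
      · exact absurd (AddSubgroup.mem_bot.1 (add_mem hpolar hcQ)) hR0
      · have hnew : (polarDiff w Q + (Q - g), d) ∈ new := by
          simpa [new, hR] using add_mem hpolar hcQ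
        exact ⟨_, Multiset.mem_add.2 (.inr hnew), by simp⟩
    · refine ⟨(c.1 - g, c.2), Multiset.mem_add.2 (.inl ?_), ?_⟩
      · exact Multiset.mem_map_of_mem (fun c ↦ (c.1 - g, c.2)) ((Multiset.mem_erase_of_ne hcg).2 hc)
      · convert add_mem hpolar hcQ using 1
        dsimp only
        abel
  · refine ⟨(Γ.erase (g, d)).map Prod.snd, new.val.map Prod.snd, {d}, by simp, ?_, ?_, ?_⟩
    · simp [old, Multiset.map_map]
    · rw [← Multiset.cons_erase hc₀, Multiset.map_cons, Multiset.erase_cons_head, add_comm,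
        Multiset.singleton_add]
    · simpa [new] using fun _ _ _ h _ ↦ h

end IsLeadingSystem

theorem IsMinimalFamily.eventually_exists_of_isLeadingSystem {𝓑 : Set (Set M)}
    (h𝓑 : IsMinimalFamily 𝓑) {p : Ultrafilter V} (hp : p + p = p)
    {Γ : Multiset ((V → M) × ℕ)} {Φ : Finset (V → M)} (hΓ : IsLeadingSystem Γ Φ) {B : Set M}
    (hB : B ∈ 𝓑) (hBne : B.Nonempty) :
    ∀ᶠ v in p, ∃ b ∈ B, ∀ Q ∈ Φ, b + Q v ∈ B := by
  classical
  induction Γ using (InvImage.wf (Multiset.map Prod.snd)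
    (Multiset.wellFounded_isDershowitzMannaLT (α := ℕ))).induction generalizing Φ B with
  | _ Γ ih =>
  by_cases hΓ0 : Γ = 0
  · obtain ⟨b, hb⟩ := hBne
    refine Eventually.of_forall fun v ↦ ⟨b, hb, fun Q hQ ↦ ?_⟩
    simpa [hΓ0] using hΓ.exists_sub_mem Q hQ
  obtain ⟨c, hc, hmin⟩ : ∃ c ∈ Γ, ∀ c' ∈ Γ, c.2 ≤ c'.2 := by
    simpa using Γ.toFinset.exists_min_image Prod.snd (by simpa using hΓ0)
  refine h𝓑.eventually_exists_of_shrinking hp (fun Q hQ ↦ hΓ.map_zero hQ) (fun W C hC hCne ↦ ?_)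
    hB hBne
  obtain ⟨Γ', hΓ', hlt⟩ := hΓ.exists_vanDerCorput W hc hmin
  filter_upwards [ih Γ' hlt hΓ' hC hCne] with v ⟨b, hb, hbv⟩
  obtain ⟨C', hC', hne, h⟩ := h𝓑.exists_translates_subset hC hb
    (S := Finset.image₂ (fun Q w ↦ Q (v + w) - Q w - c.1 v) Φ W)
    (Finset.forall_mem_image₂.2 fun Q hQ w hw ↦ add_mem_of_forall_vanDerCorput hb hbv hQ hw) (c.1 v)
  refine ⟨C', hC', hne, fun y hy Q hQ w hw ↦ ?_⟩
  simpa [add_assoc] using h y hy _ (Finset.mem_image₂_of_mem hQ hw)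

theorem IsMinimalFamily.eventually_exists_add_mem {𝓑 : Set (Set M)} (h𝓑 : IsMinimalFamily 𝓑)
    {p : Ultrafilter V} (hp : p + p = p) {Φ : Finset (V → M)}
    (hΦ : ∀ Q ∈ Φ, ∃ k, Q ∈ polyMap V M k) {B : Set M} (hB : B ∈ 𝓑) (hBne : B.Nonempty) :
    ∀ᶠ v in p, ∃ b ∈ B, ∀ Q ∈ Φ, b + Q v ∈ B := by
  choose! deg hdeg using hΦ
  have hΓ : IsLeadingSystem (Φ.val.map fun Q ↦ (Q, deg Q)) Φ := by
    refine ⟨fun c hc ↦ ?_, fun Q hQ ↦ ⟨_, Multiset.mem_map_of_mem _ hQ, by simp⟩⟩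
    obtain ⟨Q, hQ, rfl⟩ := Multiset.mem_map.1 hc
    exact polyMap_mono (Nat.le_succ _) (hdeg Q hQ)
  exact h𝓑.eventually_exists_of_isLeadingSystem hp hΓ hB hBne

end PolynomialExhaustion

section MinimalUltrafilters

theorem uAdd_eq_add (p q : Ultrafilter ℕ) : uAdd p q = p + q :=
  Ultrafilter.coe_inj.1 <| Filter.ext' fun _ ↦ Iff.rfl

theorem IdempotentUF.add_self {p : Ultrafilter ℕ} (hp : IdempotentUF p) : p + p = p := by
  rw [← uAdd_eq_add]
  exact hp

theorem ultrafilter_map_add {M N : Type*} [Add M] [Add N] (f : M →ₙ+ N) (p q : Ultrafilter M) :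
    (p + q).map f = p.map f + q.map f := by
  refine Ultrafilter.coe_inj.1 (Filter.ext' fun s ↦ ?_)
  simp only [Ultrafilter.eventually_add, Ultrafilter.coe_map, eventually_map, map_add]

theorem ultrafilter_map_injective {M N : Type*} {f : M → N} (hf : f.Injective) :
    Function.Injective (Ultrafilter.map f) := fun _ _ h ↦
  Ultrafilter.coe_inj.1 (Filter.map_injective hf (congrArg Ultrafilter.toFilter h))

theorem exists_sum_eq_of_mem_FS {M : Type*} [AddCommMonoid M] {a : Stream' M} {m : M}
    (h : m ∈ Hindman.FS a) : ∃ H : Finset ℕ, H.Nonempty ∧ ∑ t ∈ H, a.get t = m := by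
  induction h with
  | head' a => exact ⟨{0}, Finset.singleton_nonempty 0, Finset.sum_singleton _ _⟩
  | tail' a m _ ih =>
    obtain ⟨H, hH, rfl⟩ := ih
    exact ⟨H.map (addRightEmbedding 1), hH.map, Finset.sum_map _ _ _⟩
  | cons' a m _ ih =>
    obtain ⟨H, -, rfl⟩ := ih
    refine ⟨insert 0 (H.map (addRightEmbedding 1)), Finset.insert_nonempty _ _, ?_⟩
    rw [Finset.sum_insert (by simp), Finset.sum_map]
    rfl

/-- `p` generates a minimal left ideal of `(βM, +)`, equivalently it lies in one. -/
def GeneratesMinimalLeftIdeal {M : Type*} [Add M] (p : Ultrafilter M) : Prop :=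
  ∀ q : Ultrafilter M, ∃ r : Ultrafilter M, r + (q + p) = p

theorem exists_idempotent_mem_leftIdeal {M : Type*} [AddSemigroup M] {p : Ultrafilter M}
    (hp : p + p = p) (q : Ultrafilter M) :
    ∃ e r : Ultrafilter M, r + (q + p) = e ∧ e + e = e ∧ p + e = e ∧ e + p = e := by
  obtain ⟨e, ⟨r, rfl : r + (q + p) = e⟩, hee⟩ := exists_idempotent_in_compact_add_subsemigroup
    Ultrafilter.continuous_add_left (Set.range (· + (q + p)))
    ⟨_, Set.mem_range_self p⟩ (isCompact_range (Ultrafilter.continuous_add_left _)) <| by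
      rintro _ ⟨a, rfl⟩ _ ⟨b, rfl⟩
      exact ⟨a + (q + p) + b, by simp only [add_assoc]⟩
  set e := r + (q + p) with he
  have hep : e + p = e := by rw [he, add_assoc, add_assoc, hp]
  refine ⟨p + e, p + r, by rw [add_assoc, he], ?_, ?_, ?_⟩
  · rw [add_assoc, ← add_assoc e, hep, hee]
  · rw [← add_assoc, hp]
  · rw [add_assoc, hep]

theorem IsMinimalIdempotent.le_cofinite {p : Ultrafilter ℕ} (hp : IsMinimalIdempotent p) :
    (p : Filter ℕ) ≤ cofinite := by
  refine p.le_cofinite_or_eq_pure.resolve_right ?_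
  rintro ⟨n, rfl⟩
  have h0 : n = 0 := by
    have h : ∀ᶠ x in (pure n + pure n : Ultrafilter ℕ), x = n := by
      rw [hp.1.add_self]
      exact eventually_pure.2 rfl
    rw [Ultrafilter.eventually_add] at h
    exact Nat.add_eq_left.1 (eventually_pure.1 (eventually_pure.1 h))
  subst h0
  obtain ⟨U, hU, hFS⟩ := Hindman.exists_idempotent_ultrafilter_le_FS (Stream'.const 1)
  have hU0 : U = pure 0 := by
    refine hp.2 U ((uAdd_eq_add U U).trans hU) ?_ ?_ <;> rw [uAdd_eq_add] <;>
      refine Ultrafilter.coe_inj.1 (Filter.ext' fun s ↦ ?_) <;>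
      simp [Ultrafilter.eventually_add]
  obtain ⟨H, hH, hsum⟩ := exists_sum_eq_of_mem_FS (eventually_pure.1 (hU0 ▸ hFS))
  exact hH.ne_empty (by simpa using hsum)

theorem IsMinimalIdempotent.eventually_ge {p : Ultrafilter ℕ} (hp : IsMinimalIdempotent p) (N : ℕ) :
    ∀ᶠ y in p, N ≤ y :=
  (hp.le_cofinite.trans Nat.cofinite_eq_atTop.le) (eventually_ge_atTop N)

theorem IsMinimalIdempotent.generatesMinimalLeftIdeal_map_natCast {p : Ultrafilter ℕ}
    (hp : IsMinimalIdempotent p) :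
    GeneratesMinimalLeftIdeal (p.map ((↑) : ℕ → ℤ)) := by
  intro q
  let f : ℕ →ₙ+ ℤ := (Nat.castAddMonoidHom ℤ : ℕ →ₙ+ ℤ)
  have hf := ultrafilter_map_injective (Nat.cast_injective (R := ℤ))
  have hadd := ultrafilter_map_add f
  obtain ⟨e, r, hr, hee, hpe, hep⟩ := exists_idempotent_mem_leftIdeal
    ((hadd p p).symm.trans (congrArg _ hp.1.add_self)) q
  -- `p` is concentrated on large naturals, so adding it moves every ultrafilter on `ℤ` into `βℕ`.
  have hrange : Set.range ((↑) : ℕ → ℤ) ∈ e := by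
    rw [← hep, ← Ultrafilter.mem_coe, ← eventually_mem_set, Ultrafilter.eventually_add]
    refine Eventually.of_forall fun n ↦ ?_
    exact (hp.eventually_ge n.natAbs).mono fun y hy ↦
      ⟨(n + y).toNat, Int.toNat_of_nonneg (by lia : 0 ≤ n + (y : ℤ))⟩
  obtain ⟨e', rfl⟩ : ∃ e' : Ultrafilter ℕ, e'.map f = e :=
    ⟨e.comap Nat.cast_injective hrange, Ultrafilter.coe_inj.1 (Filter.map_comap_of_mem hrange)⟩
  have he' : e' = p := by
    refine hp.2 e' ?_ ?_ ?_ <;> refine (uAdd_eq_add _ _).trans (hf ?_)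
    · exact (hadd _ _).trans hee
    · exact (hadd _ _).trans hep
    · exact (hadd _ _).trans hpe
  exact ⟨r, hr.trans (congrArg _ he')⟩

/-- The return times `{n | C - n ∈ p}` of `p` to `C`. -/
def returnTimes {M : Type*} [Add M] (p : Ultrafilter M) (C : Set M) : Set M :=
  {n | ∀ᶠ y in p, n + y ∈ C}

theorem GeneratesMinimalLeftIdeal.returnTimes_syndetic {M : Type*} [AddSemigroup M]
    {p : Ultrafilter M} (hp : GeneratesMinimalLeftIdeal p) {C : Set M}
    (hC : (returnTimes p C).Nonempty) : ∃ E : Finset M, ∀ n, ∃ e ∈ E, e + n ∈ returnTimes p C := by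
  classical
  by_contra! hno
  choose n hn using hno
  obtain ⟨c, hc⟩ := hC
  obtain ⟨r, hr⟩ := hp ((Ultrafilter.of atTop).map n)
  rw [returnTimes, Set.mem_ofPred_eq, ← hr, Ultrafilter.eventually_add] at hc
  obtain ⟨e, he⟩ := hc.exists
  rw [Ultrafilter.eventually_add, Ultrafilter.coe_map, eventually_map] at he
  obtain ⟨E, hE, hEC⟩ :=
    (((eventually_ge_atTop {c + e}).filter_mono (Ultrafilter.of_le _)).and he).exists
  refine hn E (c + e) (Finset.singleton_subset_iff.1 hE) ?_
  simpa only [returnTimes, Set.mem_ofPred_eq, add_assoc] using hEC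

theorem GeneratesMinimalLeftIdeal.isMinimalFamily {M : Type*} [AddCommGroup M]
    {p : Ultrafilter M} (hp : GeneratesMinimalLeftIdeal p) :
    IsMinimalFamily (Set.range (returnTimes p)) where
  inter_mem := by
    rintro _ ⟨C, rfl⟩ _ ⟨D, rfl⟩
    exact ⟨C ∩ D, Set.ext fun n ↦ eventually_and⟩
  translate_mem := by
    rintro _ ⟨C, rfl⟩ r
    exact ⟨{y | y + r ∈ C}, by simp only [returnTimes, Set.mem_ofPred_eq, add_right_comm]⟩
  syndetic := by
    rintro _ ⟨C, rfl⟩ hC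
    simpa only [add_comm] using hp.returnTimes_syndetic hC

end MinimalUltrafilters

section PolyJSets

/-- The polynomial analogue of a J-set: one shift `a` and one index set `H` serve all `f ∈ F` and
all `P ∈ T` at once. -/
def IsPolyJSet (B : Set ℕ) : Prop :=
  ∀ F T : Finset (ℕ → ℕ), (∀ P ∈ T, IsPolyZeroConst P) →
    ∃ (a : ℕ) (H : Finset ℕ), H.Nonempty ∧ ∀ f ∈ F, ∀ P ∈ T, a + P (∑ t ∈ H, f t) ∈ B

theorem IsPolyJSet.exists_forall_ge {B : Set ℕ} (hB : IsPolyJSet B) (F : Finset (ℕ → ℕ))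
    {T : Finset (ℕ → ℕ)} (hT : ∀ P ∈ T, IsPolyZeroConst P) (N : ℕ) :
    ∃ (a : ℕ) (H : Finset ℕ), H.Nonempty ∧ (∀ t ∈ H, N ≤ t) ∧
      ∀ f ∈ F, ∀ P ∈ T, a + P (∑ t ∈ H, f t) ∈ B := by
  classical
  obtain ⟨a, H, hH, h⟩ := hB (F.image fun f t ↦ f (t + N)) T hT
  refine ⟨a, H.map (addRightEmbedding N), hH.map, by simp, fun f hf P hP ↦ ?_⟩
  simpa using h _ (Finset.mem_image_of_mem _ hf) P hP

theorem IsMinimalIdempotent.isPolyJSet {p : Ultrafilter ℕ} (hp : IsMinimalIdempotent p)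
    {B : Set ℕ} (hB : B ∈ p) : IsPolyJSet B := by
  classical
  intro F T hT
  let Φ : Finset (((ℕ → ℕ) → ℕ) → ℤ) := Finset.image₂ (fun f P v ↦ (P (v f) : ℤ)) F T
  have hΦ : ∀ Q ∈ Φ, ∃ k, Q ∈ polyMap _ ℤ k := Finset.forall_mem_image₂.2 fun f _ P hP ↦
    (hT P hP).exists_mem_polyMap (Pi.evalAddMonoidHom (fun _ ↦ ℕ) f)
  obtain ⟨U, hU, hFS⟩ := Hindman.exists_idempotent_ultrafilter_le_FS
    (fun t f ↦ f t : Stream' ((ℕ → ℕ) → ℕ))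
  have h0 : (0 : ℤ) ∈ returnTimes (p.map (↑)) ((↑) '' B) := by
    filter_upwards [hB] with y hy
    exact ⟨y, hy, (zero_add _).symm⟩
  obtain ⟨v, hv, b, -, hb⟩ := (hFS.and
    (hp.generatesMinimalLeftIdeal_map_natCast.isMinimalFamily.eventually_exists_add_mem hU hΦ
      ⟨_, rfl⟩ ⟨0, h0⟩)).exists
  obtain ⟨H, hH, rfl⟩ := exists_sum_eq_of_mem_FS hv
  obtain ⟨y, hy, hyB⟩ := ((hp.eventually_ge b.natAbs).and
    ((eventually_all_finset Φ).2 hb)).exists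
  refine ⟨(b + y).toNat, H, hH, fun f hf P hP ↦ ?_⟩
  obtain ⟨z, hz, hzy⟩ := hyB _ (Finset.mem_image₂_of_mem hf hP)
  rw [Finset.sum_apply] at hzy
  obtain rfl : z = (b + y).toNat + P (∑ t ∈ H, f t) := by
    change (z : ℤ) = b + (P (∑ t ∈ H, f t) : ℕ) + y at hzy
    lia
  exact hz

end PolyJSets

section Trees

/-- A set of finite sequences closed under extending its members of length `k < m` by `p k`-most
points. It unfolds the membership of a set in `⊗ p k` one coordinate at a time. -/
structure IsUltrafilterTree {m : ℕ} (p : Fin m → Ultrafilter ℕ) (𝒯 : Set (List ℕ)) : Prop where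
  nil_mem : [] ∈ 𝒯
  eventually_concat_mem : ∀ v ∈ 𝒯, ∀ k : Fin m, v.length = k → ∀ᶠ x in p k, v ++ [x] ∈ 𝒯

theorem exists_isUltrafilterTree_of_mem_tensor {m : ℕ} {p : Fin m → Ultrafilter ℕ}
    {A : Set (Fin m → ℕ)} (hA : A ∈ tensor m p) :
    ∃ 𝒯, IsUltrafilterTree p 𝒯 ∧ ∀ w : Fin m → ℕ, List.ofFn w ∈ 𝒯 → w ∈ A := by
  induction m with
  | zero =>
    refine ⟨Set.univ, ⟨trivial, fun _ _ k ↦ k.elim0⟩, fun w _ ↦ ?_⟩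
    rw [Subsingleton.elim w fun i ↦ i.elim0]
    exact Ultrafilter.mem_pure.1 hA
  | succ m ih =>
    let S : Set ℕ := {x | ∃ 𝒯, IsUltrafilterTree (fun i ↦ p i.succ) 𝒯 ∧
      ∀ w : Fin m → ℕ, List.ofFn w ∈ 𝒯 → (Fin.cons x w : Fin (m + 1) → ℕ) ∈ A}
    have hS : S ∈ p 0 := Filter.mem_of_superset hA fun _ hx ↦ ih hx
    choose! 𝒯 h𝒯 h𝒯A using fun x (hx : x ∈ S) ↦ hx
    refine ⟨{v | ∀ x u, v = x :: u → x ∈ S ∧ u ∈ 𝒯 x}, ⟨by simp, fun v hv k hk ↦ ?_⟩,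
      fun w hw ↦ ?_⟩
    · obtain _ | ⟨x, u⟩ := v
      · obtain rfl : k = 0 := Fin.ext hk.symm
        filter_upwards [hS] with x hx
        simpa using ⟨hx, (h𝒯 x hx).nil_mem⟩
      · obtain ⟨hx, hu⟩ := hv x u rfl
        obtain ⟨k, rfl⟩ := Fin.exists_succ_eq.2 (by rintro rfl; simp at hk : k ≠ 0)
        filter_upwards [(h𝒯 x hx).eventually_concat_mem u hu k (by simpa using hk)] with y hy
        simpa using ⟨hx, hy⟩
    · obtain ⟨hx, hu⟩ := hw (w 0) _ List.ofFn_succ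
      rw [← Fin.cons_self_tail w]
      exact h𝒯A _ hx _ hu

end Trees

section SingleCoordinate

theorem exists_shift_support {p : Ultrafilter ℕ} (hp : p + p = p)
    (hJ : ∀ B ∈ p, IsPolyJSet B) {T : Finset (ℕ → ℕ)} (hT : ∀ P ∈ T, IsPolyZeroConst P)
    {ι : Type*} {I : Finset ι} {a s : ι → ℕ} {B : ι → Set ℕ}
    (hB : ∀ i ∈ I, ∀ P ∈ T, ∀ᶠ y in p, a i + P (s i) + y ∈ B i) (F : Finset (ℕ → ℕ)) (N : ℕ) :
    ∃ (α : ℕ) (H : Finset ℕ), H.Nonempty ∧ (∀ t ∈ H, N ≤ t) ∧ ∀ i ∈ I, ∀ f ∈ F, ∀ P ∈ T,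
      a i + α + P (s i + ∑ t ∈ H, f t) ∈ B i ∧
        ∀ᶠ y in p, a i + α + P (s i + ∑ t ∈ H, f t) + y ∈ B i := by
  classical
  choose! Q hQ hPQ using fun i P hP ↦ (hT P hP).exists_apply_add (s i)
  have hC : ∀ᶠ y in p, ∀ i ∈ I, ∀ P ∈ T,
      a i + P (s i) + y ∈ B i ∧ ∀ᶠ z in p, a i + P (s i) + y + z ∈ B i := by
    simp only [eventually_all_finset]
    exact fun i hi P hP ↦ eventually_add_mem_and hp (hB i hi P hP)
  obtain ⟨α, H, hH, hN, h⟩ := (hJ _ hC).exists_forall_ge F (T := Finset.image₂ Q I T)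
    (Finset.forall_mem_image₂.2 fun i _ P hP ↦ hQ i P hP) N
  refine ⟨α, H, hH, hN, fun i hi f hf P hP ↦ ?_⟩
  have heq : a i + α + P (s i + ∑ t ∈ H, f t) =
      a i + P (s i) + (α + Q i P (∑ t ∈ H, f t)) := by
    rw [hPQ i P hP]
    ring
  rw [heq]
  exact h f hf _ (Finset.mem_image₂_of_mem hi hP) i hi P hP

end SingleCoordinate

section Stages

/-- A tuple under construction: `coords` are the finished coordinates, and the current one will be
`shift + P arg` for a polynomial `P` that is chosen only when the coordinate is closed. -/
structure PartialTuple where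
  coords : List ℕ
  shift : ℕ
  arg : ℕ

namespace PartialTuple

/-- Enlarge the current coordinate by the contribution of one further index. -/
def add (σ : PartialTuple) (a s : ℕ) : PartialTuple := ⟨σ.coords, σ.shift + a, σ.arg + s⟩

/-- Finish the current coordinate with the polynomial `P` and start the next one. -/
def close (σ : PartialTuple) (P : ℕ → ℕ) : PartialTuple := ⟨σ.coords ++ [σ.shift + P σ.arg], 0, 0⟩

theorem add_add (σ : PartialTuple) (a b s t : ℕ) :
    (σ.add a s).add b t = σ.add (a + b) (s + t) := by
  simp only [add, add_assoc]

/-- The partial tuple can be continued inside the tree `𝒯` whichever polynomial of `T` closes its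
current coordinate. -/
structure IsGood {m : ℕ} (p : Fin m → Ultrafilter ℕ) (𝒯 : Set (List ℕ)) (T : Finset (ℕ → ℕ))
    (σ : PartialTuple) : Prop where
  coords_mem : σ.coords ∈ 𝒯
  eventually_mem : ∀ k : Fin m, σ.coords.length = k → ∀ P ∈ T,
    ∀ᶠ y in p k, σ.coords ++ [σ.shift + P σ.arg + y] ∈ 𝒯

end PartialTuple

variable {m : ℕ} {p : Fin m → Ultrafilter ℕ} {𝒯 : Set (List ℕ)} {T : Finset (ℕ → ℕ)}

theorem IsUltrafilterTree.isGood (h𝒯 : IsUltrafilterTree p 𝒯)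
    (hT : ∀ P ∈ T, IsPolyZeroConst P) {v : List ℕ} (hv : v ∈ 𝒯) :
    PartialTuple.IsGood p 𝒯 T ⟨v, 0, 0⟩ where
  coords_mem := hv
  eventually_mem k hk P hP := by
    simpa only [(hT P hP).map_zero, zero_add] using h𝒯.eventually_concat_mem v hv k hk

variable (p 𝒯 T) in
/-- What is constructed at a finite set of sequences: the values there of all `α k` and `H k`, and
the partial tuples that they and the earlier stages give rise to. -/
structure Stage where
  shift : Fin m → ℕ
  support : Fin m → Finset ℕ
  states : Finset PartialTuple
  support_nonempty : ∀ k, (support k).Nonempty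
  start_mem : ⟨[], 0, 0⟩ ∈ states
  isGood : ∀ σ ∈ states, σ.IsGood p 𝒯 T

namespace Stage

/-- The states of `e` contain all continuations of `σ` that use the values of `e` and some
`f ∈ F`. -/
def Continues (e : Stage p 𝒯 T) (F : Finset (ℕ → ℕ)) (σ : PartialTuple) : Prop :=
  ∀ k : Fin m, σ.coords.length = k → ∀ f ∈ F,
    σ.add (e.shift k) (∑ t ∈ e.support k, f t) ∈ e.states ∧
      ∀ P ∈ T, (σ.add (e.shift k) (∑ t ∈ e.support k, f t)).close P ∈ e.states

/-- The stage `e`, constructed at the finite set `F`, takes the earlier stage `d` into account. -/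
structure Precedes (F : Finset (ℕ → ℕ)) (d e : Stage p 𝒯 T) : Prop where
  lt_of_mem : ∀ k, ∀ x ∈ d.support k, ∀ y ∈ e.support k, x < y
  continues : ∀ σ ∈ d.states, e.Continues F σ

theorem exists_shift_support_isGood (h𝒯 : IsUltrafilterTree p 𝒯) {k : Fin m}
    (hp : p k + p k = p k) (hJ : ∀ B ∈ p k, IsPolyJSet B) (hT : ∀ P ∈ T, IsPolyZeroConst P)
    {S : Finset PartialTuple} (hS : ∀ σ ∈ S, σ.IsGood p 𝒯 T) (F : Finset (ℕ → ℕ)) (N : ℕ) :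
    ∃ (α : ℕ) (H : Finset ℕ), H.Nonempty ∧ (∀ t ∈ H, N ≤ t) ∧
      ∀ σ ∈ S, σ.coords.length = k → ∀ f ∈ F, (σ.add α (∑ t ∈ H, f t)).IsGood p 𝒯 T ∧
        ∀ P ∈ T, ((σ.add α (∑ t ∈ H, f t)).close P).IsGood p 𝒯 T := by
  obtain ⟨α, H, hH, hN, h⟩ := exists_shift_support hp hJ hT
    (I := S.filter fun σ ↦ σ.coords.length = (k : ℕ))
    (a := PartialTuple.shift) (s := PartialTuple.arg) (B := fun σ ↦ {x | σ.coords ++ [x] ∈ 𝒯})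
    (fun σ hσ ↦ (hS σ (Finset.mem_filter.1 hσ).1).eventually_mem k (Finset.mem_filter.1 hσ).2) F N
  refine ⟨α, H, hH, hN, fun σ hσ hσk f hf ↦ ?_⟩
  have hσP := h σ (Finset.mem_filter.2 ⟨hσ, hσk⟩) f hf
  refine ⟨⟨(hS σ hσ).coords_mem, fun k' hk' P hP ↦ ?_⟩, fun P hP ↦ h𝒯.isGood hT (hσP P hP).1⟩
  obtain rfl : k' = k := Fin.ext (hk'.symm.trans hσk)
  exact (hσP P hP).2

theorem exists_forall_continues (h𝒯 : IsUltrafilterTree p 𝒯) (hT : ∀ P ∈ T, IsPolyZeroConst P)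
    {S : Finset PartialTuple} {F : Finset (ℕ → ℕ)} {α : Fin m → ℕ} {H : Fin m → Finset ℕ}
    (hH : ∀ k, (H k).Nonempty)
    (hgood : ∀ k : Fin m, ∀ σ ∈ S, σ.coords.length = k → ∀ f ∈ F,
      (σ.add (α k) (∑ t ∈ H k, f t)).IsGood p 𝒯 T ∧
        ∀ P ∈ T, ((σ.add (α k) (∑ t ∈ H k, f t)).close P).IsGood p 𝒯 T) :
    ∃ e : Stage p 𝒯 T, e.shift = α ∧ e.support = H ∧ ∀ σ ∈ S, e.Continues F σ := by
  classical
  let added : Finset PartialTuple := Finset.univ.biUnion fun k : Fin m ↦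
    Finset.image₂ (fun σ f ↦ σ.add (α k) (∑ t ∈ H k, f t))
      (S.filter fun σ ↦ σ.coords.length = (k : ℕ)) F
  have added_isGood : ∀ τ ∈ added, τ.IsGood p 𝒯 T ∧ ∀ P ∈ T, (τ.close P).IsGood p 𝒯 T := by
    simp only [added, Finset.mem_biUnion, Finset.mem_image₂, Finset.mem_filter]
    rintro _ ⟨k, -, σ, ⟨hσ, hk⟩, f, hf, rfl⟩
    exact hgood k σ hσ hk f hf
  let e : Stage p 𝒯 T :=
    { shift := α
      support := H
      states := insert ⟨[], 0, 0⟩ (added ∪ Finset.image₂ PartialTuple.close added T)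
      support_nonempty := hH
      start_mem := Finset.mem_insert_self _ _
      isGood := by
        simp only [Finset.forall_mem_insert, Finset.forall_mem_union, Finset.forall_mem_image₂]
        exact ⟨h𝒯.isGood hT h𝒯.nil_mem, fun τ hτ ↦ (added_isGood τ hτ).1,
          fun τ hτ ↦ (added_isGood τ hτ).2⟩ }
  refine ⟨e, rfl, rfl, fun σ hσ k hk f hf ↦ ?_⟩
  have hadd : σ.add (α k) (∑ t ∈ H k, f t) ∈ added := Finset.mem_biUnion.2
    ⟨k, Finset.mem_univ k, Finset.mem_image₂_of_mem (Finset.mem_filter.2 ⟨hσ, hk⟩) hf⟩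
  exact ⟨Finset.mem_insert_of_mem (Finset.mem_union_left _ hadd), fun P hP ↦
    Finset.mem_insert_of_mem (Finset.mem_union_right _ (Finset.mem_image₂_of_mem hadd hP))⟩

theorem exists_forall_precedes (h𝒯 : IsUltrafilterTree p 𝒯) (hp : ∀ k, p k + p k = p k)
    (hJ : ∀ k, ∀ B ∈ p k, IsPolyJSet B) (hT : ∀ P ∈ T, IsPolyZeroConst P)
    (𝒮 : Finset (Stage p 𝒯 T)) (F : Finset (ℕ → ℕ)) :
    ∃ e : Stage p 𝒯 T, ∀ d ∈ 𝒮, d.Precedes F e := by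
  classical
  obtain ⟨N, hN⟩ := (𝒮.biUnion fun d ↦ Finset.univ.biUnion d.support).exists_nat_subset_range
  have hS : ∀ σ ∈ 𝒮.biUnion states, σ.IsGood p 𝒯 T := fun σ hσ ↦
    have ⟨d, _, hd⟩ := Finset.mem_biUnion.1 hσ
    d.isGood σ hd
  choose α H hH hNH hgood using fun k ↦
    exists_shift_support_isGood h𝒯 (hp k) (hJ k) hT hS F N
  obtain ⟨e, rfl, rfl, he⟩ := exists_forall_continues h𝒯 hT hH hgood
  refine ⟨e, fun d hd ↦ ⟨fun k x hx y hy ↦ ?_, fun σ hσ ↦ he σ (Finset.mem_biUnion.2 ⟨d, hd, hσ⟩)⟩⟩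
  have hxN : x ∈ Finset.range N :=
    hN (Finset.mem_biUnion.2 ⟨d, hd, Finset.mem_biUnion.2 ⟨k, Finset.mem_univ k, hx⟩⟩)
  exact (Finset.mem_range.1 hxN).trans_le (hNH k y hy)

end Stage

theorem exists_forall_lt_of_forall_exists {X D : Type*} [Preorder X] [WellFoundedLT X]
    {R : X → D → D → Prop} (h : ∀ x (prev : Set.Iio x → D), ∃ d, ∀ y, R x (prev y) d) :
    ∃ g : X → D, ∀ x y, y < x → R x (g y) (g x) := by
  choose next hnext using h
  let g : X → D := wellFounded_lt.fix fun x prev ↦ next x fun y ↦ prev y y.2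
  refine ⟨g, fun x y hyx ↦ ?_⟩
  rw [show g x = next x fun y ↦ g y from WellFounded.fix_eq _ _ x]
  exact hnext x (fun y ↦ g y) ⟨y, hyx⟩

theorem exists_stages (h𝒯 : IsUltrafilterTree p 𝒯) (hp : ∀ k, p k + p k = p k)
    (hJ : ∀ k, ∀ B ∈ p k, IsPolyJSet B) (hT : ∀ P ∈ T, IsPolyZeroConst P) :
    ∃ g : Finset (ℕ → ℕ) → Stage p 𝒯 T, ∀ G F, F < G → (g F).Precedes G (g G) := by
  classical
  refine exists_forall_lt_of_forall_exists fun G prev ↦ ?_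
  have : Finite (Set.Iio G) :=
    G.ssubsets.finite_toSet.subset fun _ ↦ Finset.mem_ssubsets.2
  obtain ⟨e, he⟩ :=
    Stage.exists_forall_precedes h𝒯 hp hJ hT (Set.finite_range prev).toFinset G
  exact ⟨e, fun y ↦ he _ (by simp)⟩

theorem exists_close_sum_mem {g : Finset (ℕ → ℕ) → Stage p 𝒯 T}
    (hg : ∀ G F, F < G → (g F).Precedes G (g G)) {ι : Type*} [LinearOrder ι]
    {G : ι → Finset (ℕ → ℕ)} (hG : StrictMono G) {f : ι → ℕ → ℕ} (hf : ∀ i, f i ∈ G i)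
    {k : Fin m} {F : Finset (ℕ → ℕ)} {σ : PartialTuple} (hσ : σ ∈ (g F).states)
    (hk : σ.coords.length = k) {γ : Finset ι} (hγ : γ.Nonempty) (hF : ∀ i ∈ γ, F < G i) :
    ∃ i ∈ γ, ∀ P ∈ T, (σ.add (∑ i ∈ γ, (g (G i)).shift k)
      (∑ i ∈ γ, ∑ t ∈ (g (G i)).support k, f i t)).close P ∈ (g (G i)).states := by
  suffices ∃ i ∈ γ, ∃ τ ∈ (g (G i)).states, τ = σ.add (∑ i ∈ γ, (g (G i)).shift k)
      (∑ i ∈ γ, ∑ t ∈ (g (G i)).support k, f i t) ∧ ∀ P ∈ T, τ.close P ∈ (g (G i)).states by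
    obtain ⟨i, hi, _, -, rfl, h⟩ := this
    exact ⟨i, hi, h⟩
  induction γ using Finset.induction_on_max with
  | empty => exact absurd hγ Finset.not_nonempty_empty
  | insert a γ ha ih =>
    rw [Finset.forall_mem_insert] at hF
    obtain ⟨F', hF', hσ'⟩ : ∃ F' < G a, σ.add (∑ i ∈ γ, (g (G i)).shift k)
        (∑ i ∈ γ, ∑ t ∈ (g (G i)).support k, f i t) ∈ (g F').states := by
      obtain rfl | hγ := γ.eq_empty_or_nonempty
      · exact ⟨F, hF.1, hσ⟩
      · obtain ⟨i, hi, _, hτ, rfl, -⟩ := ih hγ hF.2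
        exact ⟨G i, hG (ha i hi), hτ⟩
    have sum_insert (φ : ι → ℕ) : ∑ i ∈ insert a γ, φ i = ∑ i ∈ γ, φ i + φ a := by
      rw [Finset.sum_insert fun h ↦ (ha a h).false, add_comm]
    have h := (hg _ _ hF').continues _ hσ' k hk (f a) (hf a)
    exact ⟨a, Finset.mem_insert_self a γ, _, h.1,
      by rw [PartialTuple.add_add, sum_insert, sum_insert], h.2⟩

theorem ofFn_mem_tree {g : Finset (ℕ → ℕ) → Stage p 𝒯 T}
    (hg : ∀ G F, F < G → (g F).Precedes G (g G)) {ι : Type*} [LinearOrder ι]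
    {G : ι → Finset (ℕ → ℕ)} (hG : StrictMono G) {f : ι → ℕ → ℕ} (hf : ∀ i, f i ∈ G i)
    {β : Fin m → Finset ι} (hβ : ∀ l, (β l).Nonempty)
    (hβlt : ∀ l l', l < l' → ∀ x ∈ β l, ∀ y ∈ β l', x < y)
    {P : Fin m → ℕ → ℕ} (hP : ∀ l, P l ∈ T) :
    List.ofFn (fun l ↦ (∑ i ∈ β l, (g (G i)).shift l) +
      P l (∑ i ∈ β l, ∑ t ∈ (g (G i)).support l, f i t)) ∈ 𝒯 := by
  set x : Fin m → ℕ := fun l ↦ (∑ i ∈ β l, (g (G i)).shift l) +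
    P l (∑ i ∈ β l, ∑ t ∈ (g (G i)).support l, f i t) with hx
  have reach (l : ℕ) (hl : l ≤ m) : ∃ F, (∀ j : Fin m, l ≤ j → ∀ i ∈ β j, F < G i) ∧
      ⟨(List.ofFn x).take l, 0, 0⟩ ∈ (g F).states := by
    induction l with
    | zero => exact ⟨∅, fun _ _ i _ ↦ Finset.empty_ssubset.2 ⟨f i, hf i⟩, (g ∅).start_mem⟩
    | succ l ih =>
      obtain ⟨F, hF, hσ⟩ := ih (Nat.le_of_succ_le hl)
      obtain ⟨i, hi, hclose⟩ := exists_close_sum_mem hg hG hf (k := ⟨l, hl⟩) hσ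
        (by simpa using Nat.le_of_succ_le hl) (hβ ⟨l, hl⟩) (hF ⟨l, hl⟩ le_rfl)
      refine ⟨G i, fun j hj i' hi' ↦ hG (hβlt ⟨l, hl⟩ j hj i hi i' hi'), ?_⟩
      rw [List.take_succ_eq_append_getElem (by simpa using hl)]
      simpa [hx, PartialTuple.add, PartialTuple.close] using hclose _ (hP ⟨l, hl⟩)
  obtain ⟨F, -, hF⟩ := reach m le_rfl
  simpa only [List.take_of_length_le (List.length_ofFn (f := x)).le]
    using ((g F).isGood _ hF).coords_mem

end Stages

theorem multidimensional_stronger_polynomial_CST_II_general (m : ℕ) (p : Fin m → Ultrafilter ℕ)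
    (hp : ∀ i, IdempotentUF (p i)) (hJ : ∀ i, ∀ B ∈ p i, IsPolyJSet B)
    (A : Set (Fin m → ℕ)) (hA : A ∈ tensor m p)
    (T : Finset (ℕ → ℕ)) (hT : ∀ P ∈ T, IsPolyZeroConst P) :
    ∃ (α : Fin m → Finset (ℕ → ℕ) → ℕ) (H : Fin m → Finset (ℕ → ℕ) → Finset ℕ),
      (∀ j F, (H j F).Nonempty) ∧
      (∀ j F G, F ⊂ G → ∀ x ∈ H j F, ∀ y ∈ H j G, x < y) ∧
      ∀ {ι : Type*} [LinearOrder ι] (G : ι → Finset (ℕ → ℕ)), StrictMono G →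
        ∀ f : ι → ℕ → ℕ, (∀ i, f i ∈ G i) → ∀ β : Fin m → Finset ι, (∀ l, (β l).Nonempty) →
          (∀ l l', l < l' → ∀ x ∈ β l, ∀ y ∈ β l', x < y) →
          ∀ P : Fin m → ℕ → ℕ, (∀ l, P l ∈ T) →
          (fun l ↦ (∑ i ∈ β l, α l (G i)) + P l (∑ i ∈ β l, ∑ t ∈ H l (G i), f i t)) ∈ A := by
  obtain ⟨𝒯, h𝒯, h𝒯A⟩ := exists_isUltrafilterTree_of_mem_tensor hA
  obtain ⟨g, hg⟩ := exists_stages h𝒯 (fun k ↦ (hp k).add_self) hJ hT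
  exact ⟨fun k F ↦ (g F).shift k, fun k F ↦ (g F).support k, fun k F ↦ (g F).support_nonempty k,
    fun k F G hFG ↦ (hg G F hFG).lt_of_mem k,
    fun G hG f hf β hβ hβlt P hP ↦ h𝒯A _ (ofFn_mem_tree hg hG hf hβ hβlt hP)⟩

/-- Multidimensional Stronger Polynomial Central Sets Theorem II (finitary form). -/
theorem multidimensional_stronger_polynomial_CST_II (m : ℕ) (hm : 1 ≤ m)
    (p : Fin m → Ultrafilter ℕ) (hp : ∀ i, IsMinimalIdempotent (p i))
    (A : Set (Fin m → ℕ)) (hA : A ∈ tensor m p)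
    (T : Finset (ℕ → ℕ)) (hT : T.Nonempty) (hTP : ∀ P ∈ T, IsPolyZeroConst P) :
    ∃ (α : Fin m → Finset (ℕ → ℕ) → ℕ) (H : Fin m → Finset (ℕ → ℕ) → Finset ℕ),
      (∀ (j : Fin m) (F : Finset (ℕ → ℕ)), F.Nonempty → (H j F).Nonempty) ∧
      (∀ (j : Fin m) (F G : Finset (ℕ → ℕ)), F.Nonempty → F ⊂ G →
        ∀ x ∈ H j F, ∀ y ∈ H j G, x < y) ∧
      (∀ n : ℕ, m ≤ n → ∀ G : Fin n → Finset (ℕ → ℕ),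
        (∀ i, (G i).Nonempty) → (∀ i j, i < j → G i ⊂ G j) →
        ∀ f : Fin n → ℕ → ℕ, (∀ i, f i ∈ G i) →
        ∀ β : Fin m → Finset (Fin n),
          (∀ l, (β l).Nonempty) →
          (∀ l l' : Fin m, l < l' → ∀ x ∈ β l, ∀ y ∈ β l', x < y) →
          ∀ P : Fin m → ℕ → ℕ, (∀ l, P l ∈ T) →
          (fun l => (∑ i ∈ β l, α l (G i)) +
              P l (∑ i ∈ β l, ∑ t ∈ H l (G i), f i t)) ∈ A) := by
  obtain ⟨α, H, hH, hHlt, hA'⟩ := multidimensional_stronger_polynomial_CST_II_general m p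
    (fun i ↦ (hp i).1) (fun i _ hB ↦ (hp i).isPolyJSet hB) A hA T hTP
  exact ⟨α, H, fun j F _ ↦ hH j F, fun j F G _ ↦ hHlt j F G,
    fun n _ G _ hG ↦ hA' G fun i j ↦ hG i j⟩

end MultiCST
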